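/- arXiv:2105.10766 — 10 statements merged into one kernel-verified Lean document; each statement's English description precedes it below -/
import Mathlib

section
/- g has the unique solution property (USP) if and only if X_0(ū) is a singleton subset of X for every input ū ∈ U^ℤ. -/
open Metric Set Filter Topology Function

universe u' v'

variable {U : Type u'} {X : Type v'}

/-- `proc g u j m x = φ_ū(m+j, m, x)`: apply `g_{u m}, g_{u (m+1)}, …, g_{u (m+j-1)}`
to `x`, in that order. -/
def proc (g : U → X → X) (u : ℤ → U) : ℕ → ℤ → X → X
  | 0, _, x => x
  | j + 1, m, x => g (u (m + j)) (proc g u j m x)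

/-- A solution of the driven system `g` for the input `u`. -/
def IsSolution (g : U → X → X) (u : ℤ → U) (x : ℤ → X) : Prop :=
  ∀ n : ℤ, x (n + 1) = g (u n) (x n)

/-- The unique solution property: every input has exactly one solution. -/
def USP (g : U → X → X) : Prop :=
  ∀ u : ℤ → U, ∃! x : ℤ → X, IsSolution g u x

/-- The set of reachable states at time `n`: `X_n(ū) = ⋂_{j ≥ 1} φ_ū(n, n - j, X)`. -/
def reach (g : U → X → X) (u : ℤ → U) (n : ℤ) : Set X :=
  ⋂ j : ℕ, Set.range (proc g u (j + 1) (n - (j + 1)))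

/-- The reachable set `X_U = ⋃ {X_n(ū) : n ∈ ℤ, ū ∈ U^ℤ}`. -/
def reachSet (g : U → X → X) : Set X :=
  ⋃ u : ℤ → U, ⋃ n : ℤ, reach g u n

/-- The left-infinite part `←u^n = (…, u_{n-2}, u_{n-1})` of an input `u`;
coordinate `k : ℕ` corresponds to time `n - 1 - k` (so `0` is the most recent one). -/
def leftOf (u : ℤ → U) (n : ℤ) : ℕ → U := fun k => u (n - 1 - (k : ℤ))

/-- The right-shift map `r : (…, u_{-2}, u_{-1}) ↦ (…, u_{-3}, u_{-2})`. -/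
def shift (w : ℕ → U) : ℕ → U := fun k => w (k + 1)

/-- The concatenation map `σ_v : (…, u_{-2}, u_{-1}) ↦ (…, u_{-2}, u_{-1}, v)`. -/
def append (v : U) (w : ℕ → U) : ℕ → U := fun k => Nat.casesOn k v w

/-- `encProc g w j = φ_ū(0, -j, ·)` for any input `ū` whose left-infinite part is `w`. -/
def encProc (g : U → X → X) : (ℕ → U) → ℕ → X → X
  | _, 0, x => x
  | w, j + 1, x => g (w 0) (encProc g (shift w) j x)

/-- The encoding map `E(←u) = X_0(ū) = ⋂_{j ≥ 1} φ_ū(0, -j, X)`. -/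
def enc (g : U → X → X) (w : ℕ → U) : Set X :=
  ⋂ j : ℕ, Set.range (encProc g w (j + 1))

/-- The map `g̃_v : (…, x_{-2}, x_{-1}) ↦ (…, x_{-2}, x_{-1}, g(v, x_{-1}))`. -/
def tildeg (g : U → X → X) (v : U) (x : ℕ → X) : ℕ → X :=
  fun k => Nat.casesOn k (g v (x 0)) x

/-- The Hausdorff semi-distance `dist(A, B) = sup_{a ∈ A} inf_{b ∈ B} d(a, b)`. -/
noncomputable def semiDist [MetricSpace X] (A B : Set X) : ℝ :=
  sSup ((fun a => Metric.infDist a B) '' A)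

theorem aux_proc_sol (g : U → X → X) (u : ℤ → U) (x : ℤ → X) (h : IsSolution g u x)
    (j : ℕ) (m : ℤ) : proc g u j m (x m) = x (m + j) := by
  induction j with
  | zero => simp [proc]
  | succ j ih =>
    rw [proc, ih, ← h]
    congr 1
    push_cast
    ring

theorem aux_sol_reach (g : U → X → X) (u : ℤ → U) (x : ℤ → X) (h : IsSolution g u x) :
    x 0 ∈ reach g u 0 := by
  refine Set.mem_iInter.2 fun j => ⟨x (0 - (j + 1)), ?_⟩
  rw [aux_proc_sol g u x h]
  congr 1
  push_cast
  ring

theorem aux_reach_sol [MetricSpace X] [CompactSpace X] [MetricSpace U]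
    (g : U → X → X) (hg : Continuous fun p : U × X => g p.1 p.2) (u : ℤ → U) (a : X)
    (ha : a ∈ reach g u 0) : ∃ x, IsSolution g u x ∧ x 0 = a := by
  let S : ℕ → Set (ℤ → X) := fun j =>
    {y | y 0 = a ∧ ∀ n : ℤ, -((j : ℤ) + 1) ≤ n → y (n + 1) = g (u n) (y n)}
  have hcl : ∀ j, IsClosed (S j) := by
    intro j
    have e : S j = {y | y 0 = a} ∩
        ⋂ n : ℤ, ⋂ _ : -((j : ℤ) + 1) ≤ n, {y | y (n + 1) = g (u n) (y n)} := by
      ext y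
      simp [S]
    rw [e]
    refine (isClosed_eq (continuous_apply 0) continuous_const).inter ?_
    refine isClosed_iInter fun n => isClosed_iInter fun _ => ?_
    refine isClosed_eq (continuous_apply (n + 1)) ?_
    exact hg.comp (continuous_const.prodMk (continuous_apply n))
  have hne : (⋂ j, S j).Nonempty := by
    refine IsCompact.nonempty_iInter_of_sequence_nonempty_isCompact_isClosed S ?_ ?_
      (hcl 0).isCompact hcl
    · rintro j y ⟨h0, h1⟩
      refine ⟨h0, fun n hn => h1 n ?_⟩
      push_cast
      omega
    · intro j
      obtain ⟨z, hz⟩ := Set.mem_iInter.1 ha j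
      refine ⟨fun n => proc g u (n + (j + 1)).toNat (0 - (j + 1)) z, ?_, ?_⟩
      · have e : ((0 : ℤ) + (j + 1)).toNat = j + 1 := by omega
        simp only [e]
        exact hz
      · intro n hn
        have e : (n + 1 + ((j : ℤ) + 1)).toNat = (n + (j + 1)).toNat + 1 := by omega
        simp only [e, proc]
        congr 2
        omega
  obtain ⟨y, hy⟩ := hne
  have hy' : ∀ j, y ∈ S j := Set.mem_iInter.1 hy
  refine ⟨y, fun n => (hy' n.natAbs).2 n (by omega), (hy' 0).1⟩

/-- `g` has the USP iff `X_0(ū)` is a singleton subset of `X` for every input. -/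
theorem stmt_1 [MetricSpace X] [CompactSpace X] [MetricSpace U]
    (g : U → X → X) (hg : Continuous fun p : U × X => g p.1 p.2) :
    USP g ↔ ∀ u : ℤ → U, ∃ x : X, reach g u 0 = {x} := by
  constructor
  · intro h u
    obtain ⟨x, hx, hu⟩ := h u
    refine ⟨x 0, Set.Subset.antisymm ?_ ?_⟩
    · intro a ha
      obtain ⟨y, hy, rfl⟩ := aux_reach_sol g hg u a ha
      rw [hu y hy]
      rfl
    · rintro _ rfl
      exact aux_sol_reach g u x hx
  · intro h u
    obtain ⟨a, ha⟩ := h u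
    obtain ⟨x, hx, -⟩ := aux_reach_sol g hg u a (by rw [ha]; rfl)
    refine ⟨x, hx, fun y hy => ?_⟩
    funext n
    obtain ⟨b, hb⟩ := h fun k => u (k + n)
    have key : ∀ z, IsSolution g u z → z n = b := by
      intro z hz
      have hs : IsSolution g (fun k => u (k + n)) (fun k => z (k + n)) := by
        intro k
        have := hz (k + n)
        simp only
        rw [← this]
        congr 1
        ring
      have := aux_sol_reach g _ _ hs
      rw [hb] at this
      simpa using this
    rw [key x hx, key y hy]
end

section
/- The encoding map E : ←U → H_X is upper semicontinuous: for every ←u ∈ ←U and every open set V ⊆ X with E(←u) ⊆ V, there exists an open neighborhood W of ←u in ←U such that E(←v) ⊆ V for every ←v ∈ W. -/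
open Metric Set Filter Topology Function

universe u' v'

variable {U : Type u'} {X : Type v'}

theorem encProc_continuous [TopologicalSpace X] [TopologicalSpace U]
    (g : U → X → X) (hg : Continuous fun p : U × X => g p.1 p.2) (j : ℕ) :
    Continuous fun p : (ℕ → U) × X => encProc g p.1 j p.2 := by
  induction j with
  | zero => exact continuous_snd
  | succ j ih =>
    have hs : Continuous fun p : (ℕ → U) × X => (shift p.1, p.2) := by
      unfold shift; fun_prop
    have h0 : Continuous fun p : (ℕ → U) × X => p.1 0 := by fun_prop
    exact hg.comp (h0.prodMk (ih.comp hs))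

theorem encProc_succ_right (g : U → X → X) (j : ℕ) :
    ∀ (w : ℕ → U) (x : X), encProc g w (j + 1) x = encProc g w j (g (w j) x) := by
  induction j with
  | zero => intro w x; rfl
  | succ j ih =>
    intro w x
    change g (w 0) (encProc g (shift w) (j + 1) x) = _
    rw [ih]
    rfl

/-- the encoding map `E` is upper semicontinuous. -/
theorem stmt_2 [MetricSpace X] [CompactSpace X] [MetricSpace U]
    (g : U → X → X) (hg : Continuous fun p : U × X => g p.1 p.2)
    (w : ℕ → U) (V : Set X) (hV : IsOpen V) (hEV : enc g w ⊆ V) :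
    ∃ W : Set (ℕ → U), IsOpen W ∧ w ∈ W ∧ ∀ w' ∈ W, enc g w' ⊆ V := by
  have hc := encProc_continuous g hg
  have hcw : ∀ (w : ℕ → U) j, Continuous (encProc g w j) := fun w j =>
    (hc j).comp (Continuous.prodMk_right w)
  have hanti : Antitone fun j : ℕ => Set.range (encProc g w (j + 1)) := by
    apply antitone_nat_of_succ_le
    rintro j _ ⟨x, rfl⟩
    exact ⟨g (w (j + 1)) x, (encProc_succ_right g (j + 1) w x).symm⟩
  obtain ⟨j, hj⟩ := exists_subset_nhds_of_isCompact
    (V := fun j : ℕ => Set.range (encProc g w (j + 1)))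
    hanti.directed_ge
    (fun j => isCompact_range (hcw w (j + 1)))
    (U := V) (fun x hx => hV.mem_nhds (hEV hx))
  have hopen : IsOpen {w' : ℕ → U | ∀ x ∈ (Set.univ : Set X), encProc g w' (j + 1) x ∈ V} := by
    rw [isOpen_iff_mem_nhds]
    intro w' hw'
    exact isCompact_univ.eventually_forall_of_forall_eventually (fun x hx =>
      (hc (j + 1)).continuousAt.eventually (hV.mem_nhds (hw' x hx)))
  refine ⟨_, hopen, fun x _ => hj ⟨x, rfl⟩, ?_⟩
  intro w' hw' y hy
  obtain ⟨x, rfl⟩ := Set.mem_iInter.1 hy j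
  exact hw' x (Set.mem_univ x)
end

section
/- Let g be a compactly driven system. Then g has the USP if and only if g has the uniform attraction property (UAP), i.e., if and only if there exists a map A assigning to each input ū ∈ U^ℤ a sequence of points (A_k(ū))_{k∈ℤ} in X with g(u_k, A_k(ū)) = A_{k+1}(ū) for all k ∈ ℤ, such that for every ε > 0 there exists J ∈ ℕ with d(φ_ū(k,k−j,x), A_k(ū)) ≤ ε for all j ≥ J, all k ∈ ℤ, all ū ∈ U^ℤ, and all x ∈ X. -/
open Metric Set Filter Topology Function

universe u' v'

variable {U : Type u'} {X : Type v'}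

/-- for a compactly driven system, the USP is equivalent to the uniform
attraction property (UAP). -/
theorem stmt_6 [MetricSpace X] [CompactSpace X] [MetricSpace U] [CompactSpace U]
    (g : U → X → X) (hg : Continuous fun p : U × X => g p.1 p.2) :
    USP g ↔
      ∃ A : (ℤ → U) → ℤ → X,
        (∀ (u : ℤ → U) (k : ℤ), g (u k) (A u k) = A u (k + 1)) ∧
          ∀ ε > (0 : ℝ), ∃ J : ℕ, ∀ j : ℕ, J ≤ j →
            ∀ (k : ℤ) (u : ℤ → U) (x : X), dist (proc g u j (k - j) x) (A u k) ≤ ε := by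
  constructor
  · intro h
    choose A hA hU using h
    simp only at hA hU
    refine ⟨A, fun u k => (hA u k).symm, ?_⟩
    by_contra hcon
    push Not at hcon
    obtain ⟨ε, hε, hcon⟩ := hcon
    let C : ℕ → Set ((ℤ → U) × (ℤ → X) × (ℤ → X)) := fun J =>
      {p | (∀ n : ℤ, -(J : ℤ) ≤ n → p.2.1 (n + 1) = g (p.1 n) (p.2.1 n)) ∧
        (∀ n : ℤ, p.2.2 (n + 1) = g (p.1 n) (p.2.2 n)) ∧ ε ≤ dist (p.2.1 0) (p.2.2 0)}
    have hcl : ∀ J, IsClosed (C J) := by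
      intro J
      refine IsClosed.and ?_ (IsClosed.and ?_ ?_)
      · simp only [setOf_forall]
        refine isClosed_iInter fun n => isClosed_iInter fun _ => ?_
        exact isClosed_eq (by fun_prop)
          (hg.comp (f := fun p : (ℤ → U) × (ℤ → X) × (ℤ → X) => (p.1 n, p.2.1 n)) (by fun_prop))
      · simp only [setOf_forall]
        refine isClosed_iInter fun n => ?_
        exact isClosed_eq (by fun_prop)
          (hg.comp (f := fun p : (ℤ → U) × (ℤ → X) × (ℤ → X) => (p.1 n, p.2.2 n)) (by fun_prop))
      · exact isClosed_le (by fun_prop) (by fun_prop)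
    have hne : ∀ J, (C J).Nonempty := by
      intro J
      obtain ⟨j, hj, k, u, x, hd⟩ := hcon J
      refine ⟨(fun n => u (n + k), fun n => proc g u (n + j).toNat (k - j) x,
        fun n => A u (n + k)), ?_, ?_, ?_⟩
      · intro n hn
        have e : (n + 1 + (j : ℤ)).toNat = (n + j).toNat + 1 := by omega
        have e2 : k - (j : ℤ) + ((n + j).toNat : ℤ) = n + k := by omega
        simp only [e, proc, e2]
      · intro n
        have e : n + 1 + k = n + k + 1 := by ring
        simp only [e]
        exact hA u (n + k)
      · simpa using hd.le
    obtain ⟨⟨u, y, a⟩, hp⟩ := IsCompact.nonempty_iInter_of_sequence_nonempty_isCompact_isClosed C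
      (fun J p hp => ⟨fun n hn => hp.1 n (by push_cast; omega), hp.2⟩) hne
      (hcl 0).isCompact hcl
    rw [mem_iInter] at hp
    have h1 : y = A u := hU u y fun n => (hp n.natAbs).1 n (by omega)
    have h2 : a = A u := hU u a (hp 0).2.1
    have h3 : ε ≤ dist (y 0) (a 0) := (hp 0).2.2
    rw [h1, h2, dist_self] at h3
    linarith
  · rintro ⟨A, hA, hJ⟩ u
    refine ⟨A u, fun n => (hA u n).symm, fun y hy => ?_⟩
    have key : ∀ (j : ℕ) (m : ℤ), proc g u j m (y m) = y (m + j) := by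
      intro j m
      induction j with
      | zero => simp [proc]
      | succ j ih =>
        rw [proc, ih, ← hy (m + j)]
        push_cast
        rw [add_assoc]
    funext k
    refine eq_of_forall_dist_le fun ε hε => ?_
    obtain ⟨J, hJ⟩ := hJ ε hε
    have := hJ J le_rfl k u (y (k - J))
    rwa [key, sub_add_cancel] at this
end

section
/- For every input ū ∈ U^ℤ and every n ∈ ℤ, ⋂_{j≥1} φ_ū(n,n−j,X) = ⋂_{j≥1} φ_ū(n,n−j,X_U). -/
open Metric Set Filter Topology Function

universe u' v'

variable {U : Type u'} {X : Type v'}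

theorem proc_add (g : U → X → X) (u : ℤ → U) (a b : ℕ) (m : ℤ) (x : X) :
    proc g u (a + b) m x = proc g u b (m + a) (proc g u a m x) := by
  induction b with
  | zero => rfl
  | succ b ih =>
    have h : m + ((a + b : ℕ) : ℤ) = m + a + b := by push_cast; ring
    change g (u (m + ((a + b : ℕ) : ℤ))) (proc g u (a + b) m x) = _
    rw [ih, h]
    rfl

theorem proc_continuous [TopologicalSpace X] [TopologicalSpace U]
    (g : U → X → X) (hg : Continuous fun p : U × X => g p.1 p.2)
    (u : ℤ → U) (j : ℕ) (m : ℤ) : Continuous (proc g u j m) := by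
  induction j with
  | zero => exact continuous_id
  | succ j ih => exact hg.comp (continuous_const.prodMk ih)

/-- `⋂_{j ≥ 1} φ_ū(n, n-j, X) = ⋂_{j ≥ 1} φ_ū(n, n-j, X_U)`. -/
theorem stmt_8 [MetricSpace X] [CompactSpace X] [MetricSpace U]
    (g : U → X → X) (hg : Continuous fun p : U × X => g p.1 p.2)
    (u : ℤ → U) (n : ℤ) :
    (⋂ j : ℕ, Set.range (proc g u (j + 1) (n - (j + 1)))) =
      ⋂ j : ℕ, proc g u (j + 1) (n - (j + 1)) '' reachSet g := by
  apply Set.Subset.antisymm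
  · intro y hy
    rw [Set.mem_iInter] at hy ⊢
    intro j
    obtain ⟨m, hm⟩ : ∃ m : ℤ, m = n - (j + 1) := ⟨_, rfl⟩
    rw [← hm]
    have hc := proc_continuous g hg u
    have hcl : IsClosed {x | proc g u (j + 1) m x = y} :=
      isClosed_eq (hc _ _) continuous_const
    have hR : ∀ i : ℕ, IsClosed (Set.range (proc g u (i + 1) (m - (i + 1)))) :=
      fun i => (isCompact_range (hc _ _)).isClosed
    have key := IsCompact.nonempty_iInter_of_sequence_nonempty_isCompact_isClosed
      (fun i : ℕ => Set.range (proc g u (i + 1) (m - (i + 1))) ∩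
        {x | proc g u (j + 1) m x = y}) ?_ ?_ ((hR 0).inter hcl).isCompact
      (fun i => (hR i).inter hcl)
    · obtain ⟨x, hx⟩ := key
      rw [Set.mem_iInter] at hx
      refine ⟨x, ?_, (hx 0).2⟩
      exact Set.mem_iUnion.2 ⟨u, Set.mem_iUnion.2 ⟨m, Set.mem_iInter.2 fun i => (hx i).1⟩⟩
    · rintro i x ⟨⟨z, hz⟩, hx⟩
      refine ⟨⟨proc g u 1 (m - (i + 1 + 1)) z, ?_⟩, hx⟩
      rw [← hz, add_comm (i + 1) 1, proc_add g u 1 (i + 1)]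
      have h1 : m - (((i + 1 : ℕ) : ℤ) + 1) = m - (i + 1 + 1) := by push_cast; ring
      have h2 : m - (i + 1 + 1) + ((1 : ℕ) : ℤ) = m - (i + 1) := by push_cast; ring
      rw [h1, h2]
    · intro i
      obtain ⟨z, hz⟩ := hy (i + 1 + j)
      refine ⟨proc g u (i + 1) (m - (i + 1)) z, ⟨z, rfl⟩, ?_⟩
      change proc g u (j + 1) m _ = y
      rw [← hz, add_assoc (i + 1) j 1, proc_add g u (i + 1) (j + 1), hm]
      have h1 : n - ((i + 1 + j : ℕ) + 1 : ℤ) = n - (j + 1) - (i + 1) := by push_cast; ring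
      have h2 : n - (j + 1) - (i + 1) + ((i + 1 : ℕ) : ℤ) = n - (j + 1) := by push_cast; ring
      rw [h1, h2]
  · exact Set.iInter_mono fun j => Set.image_subset_range _ _
end

section
/- Let g be a compactly driven system and let h : ←U → X_U be a surjective map (not assumed continuous) satisfying g(v, h(←u)) = h(σ_v(←u)) for all v ∈ U and all ←u ∈ ←U. If g does not have the USP, then h is not continuous. Equivalently, if such a surjective commuting map h is continuous, then g has the USP. -/
open Metric Set Filter Topology Function

universe u' v'

variable {U : Type u'} {X : Type v'}

theorem proc_sol {g : U → X → X} {u : ℤ → U} {x : ℤ → X} (hx : IsSolution g u x)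
    (m : ℤ) (j : ℕ) : proc g u j m (x m) = x (m + j) := by
  induction j with
  | zero => simp [proc]
  | succ j ih =>
    have := hx (m + j)
    simp only [proc, ih]
    rw [← this]
    congr 1
    push_cast
    ring

theorem sol_mem_reachSet {g : U → X → X} {u : ℤ → U} {x : ℤ → X} (hx : IsSolution g u x)
    (n : ℤ) : x n ∈ reachSet g := by
  refine mem_iUnion.2 ⟨u, mem_iUnion.2 ⟨n, mem_iInter.2 fun j => ⟨x (n - (j + 1)), ?_⟩⟩⟩
  rw [proc_sol hx]
  congr 1
  push_cast
  ring

theorem append_leftOf (u : ℤ → U) (n : ℤ) : append (u n) (leftOf u n) = leftOf u (n + 1) := by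
  funext k
  cases k with
  | zero => simp [append, leftOf]
  | succ k =>
    simp only [append, leftOf]
    congr 1
    push_cast
    ring

theorem sol_approx {g : U → X → X} {h : (ℕ → U) → X} (hsurj : Set.range h = reachSet g)
    (hcomm : ∀ (v : U) (w : ℕ → U), g v (h w) = h (append v w))
    {u : ℤ → U} {x : ℤ → X} (hx : IsSolution g u x) (j : ℕ) :
    ∀ n : ℤ, ∃ w, h w = x n ∧ ∀ k < j, w k = leftOf u n k := by
  induction j with
  | zero =>
    intro n
    have : x n ∈ Set.range h := hsurj ▸ sol_mem_reachSet hx n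
    obtain ⟨w, hw⟩ := this
    exact ⟨w, hw, fun k hk => absurd hk (Nat.not_lt_zero k)⟩
  | succ j ih =>
    intro n
    obtain ⟨m, rfl⟩ : ∃ m, n = m + 1 := ⟨n - 1, by ring⟩
    obtain ⟨w, hw, hk⟩ := ih m
    refine ⟨append (u m) w, ?_, ?_⟩
    · rw [← hcomm, hw, hx m]
    · intro k hkj
      rw [← append_leftOf]
      cases k with
      | zero => rfl
      | succ k => exact hk k (by omega)

/-- if `h : ←U → X_U` is surjective (not assumed continuous) and satisfies
`g(v, h(←u)) = h(σ_v(←u))` for all `v, ←u`, and `g` does not have the USP, then `h` is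
not continuous. -/
theorem stmt_10 [MetricSpace X] [CompactSpace X] [MetricSpace U] [CompactSpace U]
    (g : U → X → X) (hg : Continuous fun p : U × X => g p.1 p.2)
    (h : (ℕ → U) → X) (hsurj : Set.range h = reachSet g)
    (hcomm : ∀ (v : U) (w : ℕ → U), g v (h w) = h (append v w))
    (hnusp : ¬ USP g) :
    ¬ Continuous h := by
  intro hc
  apply hnusp
  intro u
  refine ⟨fun n => h (leftOf u n), fun n => ?_, fun x hx => ?_⟩
  · simp only [hcomm, append_leftOf]
  · funext n
    choose w hw hk using fun j => sol_approx hsurj hcomm hx j n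
    have ht : Tendsto w atTop (𝓝 (leftOf u n)) := by
      rw [tendsto_pi_nhds]
      intro k
      refine tendsto_const_nhds.congr' ?_
      filter_upwards [eventually_gt_atTop k] with j hj
      exact (hk j k hj).symm
    have h2 := (hc.tendsto (leftOf u n)).comp ht
    refine tendsto_nhds_unique (tendsto_const_nhds.congr fun j => ?_) h2
    exact (hw j).symm
end

section
/- Let g be a compactly driven system with the USP and let h : ←U → X_U be given by E(←u) = {h(←u)}. Define H : ←U → (X_U)^{ℤ<0} by H(←u) = (…, h(r²←u), h(r←u), h(←u)), i.e., the (−k)-th coordinate of H(←u) is h(r^{k−1}←u) for k ≥ 1. Then H is continuous (with the product topology on (X_U)^{ℤ<0}), each coordinate map π_{−k} ∘ H is surjective onto X_U, and for every v ∈ U, g̃_v ∘ H = H ∘ σ_v. -/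
open Metric Set Filter Topology Function

universe u' v'

variable {U : Type u'} {X : Type v'}

theorem shift_leftOf (u : ℤ → U) (n : ℤ) : shift (leftOf u n) = leftOf u (n - 1) := by
  funext k
  simp only [shift, leftOf]
  congr 1
  push_cast
  ring

theorem proc_eq_encProc (g : U → X → X) (u : ℤ → U) (j : ℕ) (m : ℤ) (x : X) :
    proc g u j m x = encProc g (leftOf u (m + j)) j x := by
  induction j with
  | zero => rfl
  | succ j ih =>
    have e : m + ((j + 1 : ℕ) : ℤ) - 1 = m + j := by push_cast; ring
    simp only [proc, encProc]
    rw [shift_leftOf, e, ih]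
    congr 1
    simp only [leftOf]
    congr 1
    push_cast
    ring

theorem reach_eq_enc (g : U → X → X) (u : ℤ → U) (n : ℤ) :
    reach g u n = enc g (leftOf u n) := by
  unfold reach enc
  congr 1
  funext j
  congr 1
  funext x
  rw [proc_eq_encProc]
  congr 2
  push_cast
  ring

theorem shift_append (v : U) (w : ℕ → U) : shift (append v w) = w := rfl

theorem shift_surjective : Function.Surjective (shift : (ℕ → U) → ℕ → U) := by
  intro w
  exact ⟨append (w 0) w, rfl⟩

theorem continuous_shift_map [TopologicalSpace U] :
    Continuous (shift : (ℕ → U) → ℕ → U) :=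
  continuous_pi fun k => continuous_apply (k + 1)

theorem continuous_encProc [TopologicalSpace U] [TopologicalSpace X] (g : U → X → X)
    (hg : Continuous fun p : U × X => g p.1 p.2) (j : ℕ) :
    Continuous fun p : (ℕ → U) × X => encProc g p.1 j p.2 := by
  induction j with
  | zero => exact continuous_snd
  | succ j ih =>
    have h1 : Continuous fun p : (ℕ → U) × X => encProc g (shift p.1) j p.2 :=
      ih.comp ((continuous_shift_map.comp continuous_fst).prodMk continuous_snd)
    have h2 : Continuous fun p : (ℕ → U) × X => p.1 0 :=
      (continuous_apply 0).comp continuous_fst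
    exact hg.comp (h2.prodMk h1)

theorem continuous_h [MetricSpace X] [CompactSpace X] [MetricSpace U]
    (g : U → X → X) (hg : Continuous fun p : U × X => g p.1 p.2)
    (h : (ℕ → U) → X) (hh : ∀ w : ℕ → U, enc g w = {h w}) : Continuous h := by
  have e : {p : (ℕ → U) × X | p.2 = h p.1} =
      ⋂ j : ℕ, Prod.fst '' {q : ((ℕ → U) × X) × X | encProc g q.1.1 (j + 1) q.2 = q.1.2} := by
    ext ⟨w, x⟩
    have : x = h w ↔ x ∈ enc g w := by rw [hh]; rfl
    simp only [Set.mem_setOf_eq, this, enc, Set.mem_iInter, Set.mem_range, Set.mem_image]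
    constructor
    · intro hx j
      obtain ⟨y, hy⟩ := hx j
      exact ⟨((w, x), y), hy, rfl⟩
    · intro hx j
      obtain ⟨⟨⟨w', x'⟩, y⟩, hy, he⟩ := hx j
      cases he
      exact ⟨y, hy⟩
  have c : IsClosed {p : (ℕ → U) × X | p.2 = h p.1} := by
    rw [e]
    refine isClosed_iInter fun j => ?_
    refine isClosedMap_fst_of_compactSpace _ (isClosed_eq ?_ ?_)
    · exact (continuous_encProc g hg (j + 1)).comp
        ((continuous_fst.comp continuous_fst).prodMk continuous_snd)
    · exact continuous_snd.comp continuous_fst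
  refine continuous_iff_isClosed.2 fun C hC => ?_
  have e2 : h ⁻¹' C = Prod.fst '' ({p : (ℕ → U) × X | p.2 = h p.1} ∩ Prod.snd ⁻¹' C) := by
    ext w
    constructor
    · intro hw
      exact ⟨(w, h w), ⟨rfl, hw⟩, rfl⟩
    · rintro ⟨⟨w', x⟩, ⟨hx, hC'⟩, he⟩
      cases he
      have hx2 : x = h w' := hx
      have hC2 : x ∈ C := hC'
      rw [hx2] at hC2
      exact hC2
  rw [e2]
  exact isClosedMap_fst_of_compactSpace _ (c.inter (hC.preimage continuous_snd))

theorem h_append (g : U → X → X) (h : (ℕ → U) → X) (hh : ∀ w : ℕ → U, enc g w = {h w})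
    (v : U) (w : ℕ → U) : g v (h w) = h (append v w) := by
  have hm : h w ∈ enc g w := by rw [hh]; rfl
  have : g v (h w) ∈ enc g (append v w) := by
    rw [enc, Set.mem_iInter] at hm ⊢
    intro j
    cases j with
    | zero => exact ⟨h w, rfl⟩
    | succ j =>
      obtain ⟨y, hy⟩ := hm j
      exact ⟨y, congrArg (g v) hy⟩
  rw [hh] at this
  exact this

/-- under the USP, the map `H(←u) = (…, h(r²←u), h(r←u), h(←u))` is
continuous, each coordinate map is surjective onto `X_U`, and `g̃_v ∘ H = H ∘ σ_v`. -/
theorem stmt_11 [MetricSpace X] [CompactSpace X] [MetricSpace U] [CompactSpace U]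
    (g : U → X → X) (hg : Continuous fun p : U × X => g p.1 p.2)
    (husp : USP g) (h : (ℕ → U) → X) (hh : ∀ w : ℕ → U, enc g w = {h w})
    (H : (ℕ → U) → ℕ → X) (hH : ∀ (w : ℕ → U) (k : ℕ), H w k = h (shift^[k] w)) :
    Continuous H ∧
      (∀ k : ℕ, Set.range (fun w => H w k) = reachSet g) ∧
      ∀ v : U, tildeg g v ∘ H = H ∘ append v := by
  refine ⟨?_, ?_, ?_⟩
  · refine continuous_pi fun k => ?_
    have : (fun w => H w k) = h ∘ shift^[k] := funext fun w => hH w k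
    rw [this]
    exact (continuous_h g hg h hh).comp (continuous_shift_map.iterate k)
  · intro k
    have : (fun w => H w k) = h ∘ shift^[k] := funext fun w => hH w k
    rw [this, (shift_surjective.iterate k).range_comp]
    ext x
    simp only [reachSet, Set.mem_iUnion, reach_eq_enc, hh, Set.mem_range, Set.mem_singleton_iff]
    constructor
    · rintro ⟨w, rfl⟩
      refine ⟨fun z => w (-1 - z).toNat, 0, ?_⟩
      congr 1
      funext k
      simp [leftOf]
    · rintro ⟨u, n, rfl⟩
      exact ⟨_, rfl⟩
  · intro v
    funext w k
    cases k with
    | zero =>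
      simp only [Function.comp, tildeg, hH]
      exact h_append g h hh v w
    | succ k =>
      simp only [Function.comp, tildeg, hH, Function.iterate_succ_apply, shift_append]
end

section
/- Let g be a compactly driven system with the USP such that for every x ∈ X the map g(·,x) : U → X is injective. Then the causal mapping H : ←U → (X_U)^{ℤ<0}, H(←u) = (…, h(r←u), h(←u)) where E(←u) = {h(←u)}, is injective, and hence H is a homeomorphism of ←U onto its image H(←U); that is, H is a causal embedding. -/
open Metric Set Filter Topology Function

universe u' v'

variable {U : Type u'} {X : Type v'}

/-- under the USP, if `g(·, x)` is injective for every `x ∈ X`, then the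
causal mapping `H(←u) = (…, h(r←u), h(←u))` is injective, and it is a homeomorphism
onto its image, i.e. a causal embedding. -/
theorem stmt_13 [MetricSpace X] [CompactSpace X] [MetricSpace U] [CompactSpace U]
    (g : U → X → X) (hg : Continuous fun p : U × X => g p.1 p.2)
    (husp : USP g) (hinj : ∀ x : X, Function.Injective fun v : U => g v x)
    (h : (ℕ → U) → X) (hh : ∀ w : ℕ → U, enc g w = {h w})
    (H : (ℕ → U) → ℕ → X) (hH : ∀ (w : ℕ → U) (k : ℕ), H w k = h (shift^[k] w)) :
    Function.Injective H ∧ Topology.IsEmbedding H := by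
  have hstep : ∀ w : ℕ → U, h w = g (w 0) (h (shift w)) := by
    intro w
    have hm : g (w 0) (h (shift w)) ∈ enc g w := by
      refine Set.mem_iInter.2 fun j => ?_
      cases j with
      | zero => exact ⟨h (shift w), rfl⟩
      | succ k =>
        have h1 : h (shift w) ∈ enc g (shift w) := by rw [hh]; rfl
        obtain ⟨y, hy⟩ := Set.mem_iInter.1 h1 k
        exact ⟨y, congrArg (g (w 0)) hy⟩
    rw [hh] at hm
    exact (Set.mem_singleton_iff.1 hm).symm
  have hsh : ∀ (k : ℕ) (w : ℕ → U), shift^[k] w 0 = w k := by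
    intro k
    induction k with
    | zero => intro w; rfl
    | succ k ih =>
      intro w
      rw [Function.iterate_succ_apply, ih]
      rfl
  have hHinj : Function.Injective H := by
    intro w w' hw
    funext k
    have e : ∀ k, h (shift^[k] w) = h (shift^[k] w') := fun k => by
      rw [← hH, ← hH, hw]
    have e0 := e k
    have e1 := e (k + 1)
    rw [hstep, hstep (shift^[k] w'), hsh, hsh, ← Function.iterate_succ_apply' shift,
      ← Function.iterate_succ_apply' shift, e1] at e0
    exact hinj _ e0
  have hshc : Continuous (shift : (ℕ → U) → ℕ → U) :=
    continuous_pi fun k => continuous_apply (k + 1)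
  have hproc : ∀ j : ℕ, Continuous fun p : (ℕ → U) × X => encProc g p.1 j p.2 := by
    intro j
    induction j with
    | zero => exact continuous_snd
    | succ j ih =>
      have h1 : Continuous fun p : (ℕ → U) × X => encProc g (shift p.1) j p.2 :=
        ih.comp ((hshc.comp continuous_fst).prodMk continuous_snd)
      exact hg.comp (((continuous_apply 0).comp continuous_fst).prodMk h1)
  have hgraph : IsClosed {p : (ℕ → U) × X | p.2 = h p.1} := by
    have he : {p : (ℕ → U) × X | p.2 = h p.1} =
        ⋂ j : ℕ, Prod.fst '' {q : ((ℕ → U) × X) × X |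
          encProc g q.1.1 (j + 1) q.2 = q.1.2} := by
      ext ⟨w, x⟩
      have h1 : x = h w ↔ x ∈ enc g w := by rw [hh]; rfl
      simp only [Set.mem_setOf_eq, h1, enc, Set.mem_iInter, Set.mem_range, Set.mem_image,
        Prod.exists, exists_and_right, exists_eq_right]
    rw [he]
    refine isClosed_iInter fun j => ?_
    refine isClosedMap_fst_of_compactSpace _ (isClosed_eq ?_ ?_)
    · exact (hproc (j + 1)).comp ((continuous_fst.comp continuous_fst).prodMk continuous_snd)
    · exact continuous_snd.comp continuous_fst
  have hc : Continuous h := by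
    rw [continuous_iff_isClosed]
    intro s hs
    have he : h ⁻¹' s = Prod.fst '' ({p : (ℕ → U) × X | p.2 = h p.1} ∩ Prod.snd ⁻¹' s) := by
      ext w
      simp
    rw [he]
    exact isClosedMap_fst_of_compactSpace _ (hgraph.inter (hs.preimage continuous_snd))
  have hHc : Continuous H := by
    refine continuous_pi fun k => ?_
    simp only [hH]
    exact hc.comp (hshc.iterate k)
  exact ⟨hHinj, (hHc.isClosedEmbedding hHinj).isEmbedding⟩
end

section
/- Let g be a compactly driven system without the USP. Suppose H : ←U → (X_U)^{ℤ<0} is a map (not assumed continuous) that is surjective onto (X_U)^{ℤ<0} and satisfies g̃_v ∘ H = H ∘ σ_v for every v ∈ U. Then H is discontinuous. -/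
open Metric Set Filter Topology Function

universe u' v'

variable {U : Type u'} {X : Type v'}

theorem proc_solution_aux (g : U → X → X) (u : ℤ → U) (y : ℤ → X) (hy : IsSolution g u y)
    (j : ℕ) (m : ℤ) : proc g u j m (y m) = y (m + j) := by
  induction j with
  | zero => simp [proc]
  | succ j ih =>
    simp only [proc, ih]
    rw [← hy (m + j)]
    push_cast
    congr 1
    ring

theorem solution_mem_reachSet_aux (g : U → X → X) (u : ℤ → U) (y : ℤ → X)
    (hy : IsSolution g u y) (n : ℤ) : y n ∈ reachSet g := by
  refine mem_iUnion.2 ⟨u, mem_iUnion.2 ⟨n, mem_iInter.2 fun j => ⟨y (n - (j + 1)), ?_⟩⟩⟩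
  rw [proc_solution_aux g u y hy]
  congr 1
  push_cast
  ring

theorem leftOf_succ_aux (u : ℤ → U) (n : ℤ) : leftOf u (n + 1) = append (u n) (leftOf u n) := by
  funext k
  cases k with
  | zero => simp [leftOf, append]
  | succ k =>
    simp only [leftOf, append]
    congr 1
    push_cast
    ring

theorem approx_aux (g : U → X → X) (h : (ℕ → U) → X)
    (hh : ∀ v w, h (append v w) = g v (h w)) (u : ℤ → U) (y : ℤ → X) (hy : IsSolution g u y)
    (hs : ∀ n, ∃ w, h w = y n) (j : ℕ) :
    ∀ n : ℤ, ∃ W : ℕ → U, (∀ k < j, W k = leftOf u n k) ∧ h W = y n := by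
  induction j with
  | zero =>
    intro n
    obtain ⟨w, hw⟩ := hs n
    exact ⟨w, by simp, hw⟩
  | succ j ih =>
    intro n
    obtain ⟨m, rfl⟩ : ∃ m, n = m + 1 := ⟨n - 1, by ring⟩
    obtain ⟨W, hW, hWy⟩ := ih m
    refine ⟨append (u m) W, ?_, ?_⟩
    · intro k hk
      rw [leftOf_succ_aux]
      cases k with
      | zero => rfl
      | succ k => exact hW k (by omega)
    · rw [hh, hWy, hy m]

/-- if `g` does not have the USP and `H : ←U → (X_U)^{ℤ<0}` is surjective
onto `(X_U)^{ℤ<0}` with `g̃_v ∘ H = H ∘ σ_v` for every `v`, then `H` is discontinuous. -/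
theorem stmt_14 [MetricSpace X] [CompactSpace X] [MetricSpace U] [CompactSpace U]
    (g : U → X → X) (hg : Continuous fun p : U × X => g p.1 p.2)
    (hnusp : ¬ USP g)
    (H : (ℕ → U) → ℕ → X) (hrange : ∀ (w : ℕ → U) (k : ℕ), H w k ∈ reachSet g)
    (hsurj : ∀ y : ℕ → X, (∀ k : ℕ, y k ∈ reachSet g) → ∃ w : ℕ → U, H w = y)
    (hcomm : ∀ v : U, tildeg g v ∘ H = H ∘ append v) :
    ¬ Continuous H := by
  intro hc
  apply hnusp
  have hh : ∀ v w, H (append v w) 0 = g v (H w 0) := fun v w =>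
    (congrFun (congrFun (hcomm v) w) 0).symm
  have hc0 : Continuous fun w => H w 0 := (continuous_apply 0).comp hc
  intro u
  refine ⟨fun n => H (leftOf u n) 0, ?_, ?_⟩
  · intro n
    simp only [leftOf_succ_aux, hh]
  · intro y hy
    funext n
    have hs : ∀ n, ∃ w, H w 0 = y n := fun n => by
      obtain ⟨w, hw⟩ := hsurj (fun _ => y n) fun _ => solution_mem_reachSet_aux g u y hy n
      exact ⟨w, congrFun hw 0⟩
    choose W hW hWy using fun j => approx_aux g (fun w => H w 0) hh u y hy hs j n
    have hlim : Tendsto W atTop (𝓝 (leftOf u n)) := by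
      rw [tendsto_pi_nhds]
      intro k
      refine tendsto_const_nhds.congr' ?_
      filter_upwards [eventually_gt_atTop k] with j hj
      exact (hW j k hj).symm
    have h1 := (hc0.tendsto (leftOf u n)).comp hlim
    have h2 : ((fun w => H w 0) ∘ W) = fun _ => y n := funext hWy
    rw [h2] at h1
    exact tendsto_nhds_unique tendsto_const_nhds h1
end

section
/- Let g be a driven system (U a metric space, not necessarily compact) with the USP. Then g has the global-input related stability property (GIRST): the encoding map E : ←U → H_X is continuous, where H_X carries the Hausdorff metric. -/
open Metric Set Filter Topology Function

universe u' v'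

variable {U : Type u'} {X : Type v'}

/-- Left solutions. -/
def LSol (g : U → X → X) (w : ℕ → U) (y : ℕ → X) : Prop :=
  ∀ k, y k = g (w k) (y (k + 1))

/-- A two-sided input extending `w`. -/
def extU (w : ℕ → U) : ℤ → U
  | Int.ofNat _ => w 0
  | Int.negSucc n => w n

/-- Forward orbit. -/
def fwd (g : U → X → X) (v : U) (x : X) : ℕ → X
  | 0 => x
  | n + 1 => g v (fwd g v x n)

/-- A two-sided solution extending `y`. -/
def extX (g : U → X → X) (w : ℕ → U) (y : ℕ → X) : ℤ → X
  | Int.ofNat n => fwd g (w 0) (y 0) n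
  | Int.negSucc n => y (n + 1)

theorem extX_sol (g : U → X → X) (w : ℕ → U) (y : ℕ → X) (h : LSol g w y) :
    IsSolution g (extU w) (extX g w y) := by
  intro n
  match n with
  | Int.ofNat n => rfl
  | Int.negSucc 0 => exact h 0
  | Int.negSucc (n + 1) => exact h (n + 1)

theorem extX_neg (g : U → X → X) (w : ℕ → U) (y : ℕ → X) (k : ℕ) :
    extX g w y (-(k : ℤ)) = y k := by
  cases k <;> rfl

theorem lsol_existsUnique (g : U → X → X) (husp : USP g) (w : ℕ → U) :
    ∃! y : ℕ → X, LSol g w y := by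
  obtain ⟨x, hx, hu⟩ := husp (extU w)
  refine ⟨fun k => x (-(k : ℤ)), ?_, ?_⟩
  · intro k
    have h := hx (Int.negSucc k)
    have e : Int.negSucc k + 1 = -(k : ℤ) := by omega
    have e2 : Int.negSucc k = -((k + 1 : ℕ) : ℤ) := by omega
    rw [e] at h
    change x (-(k : ℤ)) = g (w k) (x (-((k + 1 : ℕ) : ℤ)))
    rw [h, ← e2]
    rfl
  · intro y hy
    have h := hu _ (extX_sol g w y hy)
    funext k
    rw [← h, extX_neg]

theorem encProc_lsol (g : U → X → X) (n : ℕ) : ∀ (w : ℕ → U) (y : ℕ → X), LSol g w y →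
    encProc g w n (y n) = y 0 := by
  induction n with
  | zero => intro w y h; rfl
  | succ n ih =>
    intro w y h
    have := ih (shift w) (fun k => y (k + 1)) (fun k => h (k + 1))
    simp only [encProc]
    rw [this]
    exact (h 0).symm

theorem encProc_partial (g : U → X → X) (n : ℕ) : ∀ (w : ℕ → U) (x : X),
    ∃ y : ℕ → X, y 0 = encProc g w n x ∧ ∀ k < n, y k = g (w k) (y (k + 1)) := by
  induction n with
  | zero => intro w x; exact ⟨fun _ => x, rfl, by simp⟩
  | succ n ih =>
    intro w x
    obtain ⟨y, h0, hy⟩ := ih (shift w) x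
    refine ⟨fun k => Nat.casesOn k (encProc g w (n + 1) x) y, rfl, ?_⟩
    intro k hk
    cases k with
    | zero => exact congrArg (g (w 0)) h0.symm
    | succ k => exact hy k (by omega)

theorem enc_lsol [MetricSpace X] [CompactSpace X] [MetricSpace U]
    (g : U → X → X) (hg : Continuous fun p : U × X => g p.1 p.2)
    (w : ℕ → U) (z : X) (hz : z ∈ enc g w) : ∃ y, LSol g w y ∧ y 0 = z := by
  let K : ℕ → Set (ℕ → X) := fun n =>
    {y | y 0 = z ∧ ∀ k < n + 1, y k = g (w k) (y (k + 1))}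
  have hc : ∀ n, IsClosed (K n) := by
    intro n
    refine (isClosed_eq (by fun_prop) (by fun_prop)).inter ?_
    have e : {y : ℕ → X | ∀ k < n + 1, y k = g (w k) (y (k + 1))} =
        ⋂ k, ⋂ (_ : k < n + 1), {y : ℕ → X | y k = g (w k) (y (k + 1))} := by
      ext y; simp
    change IsClosed {y : ℕ → X | ∀ k < n + 1, y k = g (w k) (y (k + 1))}
    rw [e]
    refine isClosed_iInter fun k => isClosed_iInter fun _ => isClosed_eq (by fun_prop) ?_
    exact hg.comp (f := fun y : ℕ → X => (w k, y (k + 1))) (by fun_prop)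
  have hne := IsCompact.nonempty_iInter_of_sequence_nonempty_isCompact_isClosed K
    (fun n y hy => ⟨hy.1, fun k hk => hy.2 k (by omega)⟩)
    (fun n => by
      obtain ⟨x, hx⟩ := Set.mem_iInter.1 hz n
      obtain ⟨y, h0, hy⟩ := encProc_partial g (n + 1) w x
      exact ⟨y, h0.trans hx, hy⟩)
    (hc 0).isCompact hc
  obtain ⟨y, hy⟩ := hne
  rw [Set.mem_iInter] at hy
  exact ⟨y, fun k => (hy k).2 k (by omega), (hy 0).1⟩

/-- if `g` has the USP (with `U` not necessarily compact), then `g` has the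
GIRST: the encoding map `E : ←U → H_X` is continuous for the Hausdorff metric. -/
theorem stmt_17 [MetricSpace X] [CompactSpace X] [MetricSpace U]
    (g : U → X → X) (hg : Continuous fun p : U × X => g p.1 p.2)
    (husp : USP g) :
    ∀ w : ℕ → U,
      Tendsto (fun w' : ℕ → U => Metric.hausdorffDist (enc g w') (enc g w))
        (𝓝 w) (𝓝 0) := by
  intro w
  choose s hs hu using lsol_existsUnique g husp
  have henc : ∀ w, enc g w = {s w 0} := by
    intro w
    ext z
    constructor
    · intro hz
      obtain ⟨y, hy, rfl⟩ := enc_lsol g hg w z hz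
      rw [hu w y hy]
      rfl
    · rintro rfl
      exact Set.mem_iInter.2 fun j => ⟨s w (j + 1), encProc_lsol g (j + 1) w _ (hs w)⟩
  have hcont : Continuous s := by
    have hcl : IsClosed {p : (ℕ → U) × (ℕ → X) | LSol g p.1 p.2} := by
      have e : {p : (ℕ → U) × (ℕ → X) | LSol g p.1 p.2} =
          ⋂ k, {p : (ℕ → U) × (ℕ → X) | p.2 k = g (p.1 k) (p.2 (k + 1))} := by
        ext y; simp [LSol]
      rw [e]
      refine isClosed_iInter fun k => isClosed_eq (by fun_prop) ?_
      exact hg.comp (f := fun p : (ℕ → U) × (ℕ → X) => (p.1 k, p.2 (k + 1))) (by fun_prop)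
    refine continuous_iff_isClosed.2 fun C hC => ?_
    have e : Set.preimage s C = Set.image Prod.fst
        ({p : (ℕ → U) × (ℕ → X) | LSol g p.1 p.2} ∩ Set.preimage Prod.snd C) := by
      ext v
      constructor
      · intro hv
        exact ⟨(v, s v), ⟨hs v, hv⟩, rfl⟩
      · rintro ⟨⟨a, y⟩, ⟨h1, h2⟩, rfl⟩
        have h3 : y = s a := hu a y h1
        subst h3
        exact h2
    change IsClosed (Set.preimage s C)
    rw [e]
    exact isClosedMap_fst_of_compactSpace _ (hcl.inter (hC.preimage continuous_snd))
  simp only [henc, hausdorffDist_singleton]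
  have := ((continuous_apply 0).comp hcont).tendsto w
  exact tendsto_iff_dist_tendsto_zero.1 this
end

section
/- Let g be a driven system with the USP and suppose X contains more than one point. Then for no u ∈ U is the map g(u,·) : X → X surjective. -/
open Metric Set Filter Topology Function

universe u' v'

variable {U : Type u'} {X : Type v'}

/-- if `g` has the USP and `X` has more than one point, then `g(u, ·)` is
not surjective for any `u ∈ U`. -/
theorem stmt_19 [MetricSpace X] [CompactSpace X] [MetricSpace U]
    (g : U → X → X) (hg : Continuous fun p : U × X => g p.1 p.2)
    (husp : USP g) (htwo : ∃ x y : X, x ≠ y) :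
    ∀ u : U, ¬ Function.Surjective (g u) := by
  intro u hs
  obtain ⟨x, y, hxy⟩ := htwo
  obtain ⟨s, hs⟩ := hs.hasRightInverse
  have key : ∀ x : X, IsSolution g (fun _ => u)
      (fun n : ℤ => (g u)^[n.toNat] (s^[(-n).toNat] x)) := by
    intro x n
    show (g u)^[(n + 1).toNat] (s^[(-(n + 1)).toNat] x)
      = g u ((g u)^[n.toNat] (s^[(-n).toNat] x))
    rcases le_or_gt 0 n with h | h
    · have h1 : (n + 1).toNat = n.toNat + 1 := by omega
      have h2 : (-(n + 1)).toNat = 0 := by omega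
      have h3 : (-n).toNat = 0 := by omega
      rw [h1, h2, h3, Function.iterate_succ_apply']
    · have h1 : (n + 1).toNat = 0 := by omega
      have h2 : (-n).toNat = (-(n + 1)).toNat + 1 := by omega
      have h3 : n.toNat = 0 := by omega
      rw [h1, h2, h3, Function.iterate_succ_apply']
      exact (hs _).symm
  have h := congrFun ((husp fun _ => u).unique (key x) (key y)) 0
  exact hxy (by simpa using h)
end
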